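/- Pure-trace property of the symmetric spatial modified Ricci components (equation (Rijeq) of Lemma 4.4): assume K_ij = K_ji and Γ_ijb = −Γ_ibj identically on ℝ⁴, and that (E-K) holds at every point of ℝ⁴. Then for all i, j ∈ {1,2,3}: e_0 K_ij + (tr K) K_ij + ½( r̂_ij + r̂_ji ) = δ_ij ( ∂_t (tr K) + |K|² ) at every point of ℝ⁴. -/

import Mathlib

open scoped BigOperators

noncomputable section

/-- Points of `ℝ⁴ = ℝ_t × ℝ³`; coordinate `0` is time. -/
abbrev Pt : Type := Fin 4 → ℝ

/-- Coordinate partial derivative `∂_μ u`. -/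
def pd (μ : Fin 4) (u : Pt → ℝ) (p : Pt) : ℝ := fderiv ℝ u p (Pi.single μ 1)

/-- Frame derivative `e_i u = Σ_j f_i^j ∂_j u` along the spatial frame `f`. -/
def fr (f : Fin 3 → Fin 3 → Pt → ℝ) (i : Fin 3) (u : Pt → ℝ) (p : Pt) : ℝ :=
  ∑ j : Fin 3, f i j p * pd j.succ u p

/-- `tr K = Σ_c K_cc`. -/
def trK (K : Fin 3 → Fin 3 → Pt → ℝ) (p : Pt) : ℝ := ∑ c : Fin 3, K c c p

/-- `|K|² = Σ_{i,j} (K_ij)²`. -/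
def nK2 (K : Fin 3 → Fin 3 → Pt → ℝ) (p : Pt) : ℝ :=
  ∑ i : Fin 3, ∑ j : Fin 3, (K i j p) ^ 2

/-- `|Γ|² = Σ_{i,j,b} (Γ_ijb)²`. -/
def nG2 (G : Fin 3 → Fin 3 → Fin 3 → Pt → ℝ) (p : Pt) : ℝ :=
  ∑ i : Fin 3, ∑ j : Fin 3, ∑ b : Fin 3, (G i j b p) ^ 2

/-- Kronecker delta. -/
def kd (i j : Fin 3) : ℝ := if i = j then 1 else 0

/-- The modified evolution equation (E-K) for `K_ij` at the point `p`. -/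
def EK (f K : Fin 3 → Fin 3 → Pt → ℝ) (G : Fin 3 → Fin 3 → Fin 3 → Pt → ℝ)
    (i j : Fin 3) (p : Pt) : Prop :=
  pd 0 (K i j) p + trK K p * K i j p =
    (1 / 2) * ( fr f i (fun q => ∑ b : Fin 3, G b j b q) p
      - (∑ b : Fin 3, fr f b (G i j b) p)
      + (∑ b : Fin 3, ∑ c : Fin 3, G b i c p * G c j b p)
      + (∑ b : Fin 3, ∑ c : Fin 3, G b b c p * G i j c p)
      + fr f j (fun q => ∑ b : Fin 3, G b i b q) p
      - (∑ b : Fin 3, fr f b (G j i b) p)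
      + (∑ b : Fin 3, ∑ c : Fin 3, G b j c p * G c i b p)
      + (∑ b : Fin 3, ∑ c : Fin 3, G b b c p * G j i c p) )
    - (1 / 2) * kd i j *
      ( 2 * (∑ a : Fin 3, fr f a (fun q => ∑ b : Fin 3, G b a b q) p)
      + (∑ b : Fin 3, ∑ a : Fin 3, ∑ c : Fin 3, G b a c p * G c a b p)
      + (∑ c : Fin 3, (∑ b : Fin 3, G b b c p) * (∑ a : Fin 3, G a a c p))
      + nK2 K p - (trK K p) ^ 2 )

/-- The unmodified evolution equation (E-K₀) for `K_ij` at the point `p`. -/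
def EK0 (f K : Fin 3 → Fin 3 → Pt → ℝ) (G : Fin 3 → Fin 3 → Fin 3 → Pt → ℝ)
    (i j : Fin 3) (p : Pt) : Prop :=
  pd 0 (K i j) p + trK K p * K i j p =
    (1 / 2) * ( fr f i (fun q => ∑ b : Fin 3, G b j b q) p
      - (∑ b : Fin 3, fr f b (G i j b) p)
      + (∑ b : Fin 3, ∑ c : Fin 3, G b i c p * G c j b p)
      + (∑ b : Fin 3, ∑ c : Fin 3, G b b c p * G i j c p)
      + fr f j (fun q => ∑ b : Fin 3, G b i b q) p
      - (∑ b : Fin 3, fr f b (G j i b) p)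
      + (∑ b : Fin 3, ∑ c : Fin 3, G b j c p * G c i b p)
      + (∑ b : Fin 3, ∑ c : Fin 3, G b b c p * G j i c p) )

/-- The modified evolution equation (E-Γ) for `Γ_ijb` at the point `p`. -/
def EG (f K : Fin 3 → Fin 3 → Pt → ℝ) (G : Fin 3 → Fin 3 → Fin 3 → Pt → ℝ)
    (i j b : Fin 3) (p : Pt) : Prop :=
  pd 0 (G i j b) p + (∑ c : Fin 3, K i c p * G c j b p) =
    fr f j (K b i) p - fr f b (K j i) p
    - (∑ c : Fin 3, G j b c p * K c i p) - (∑ c : Fin 3, G j i c p * K b c p)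
    + (∑ c : Fin 3, G b j c p * K c i p) + (∑ c : Fin 3, G b i c p * K j c p)
    + kd i b * ( (∑ c : Fin 3, fr f c (K c j) p)
      - (∑ c : Fin 3, ∑ l : Fin 3, G c c l p * K l j p)
      - (∑ c : Fin 3, ∑ l : Fin 3, G c j l p * K c l p)
      - fr f j (trK K) p )
    - kd i j * ( (∑ c : Fin 3, fr f c (K c b) p)
      - (∑ c : Fin 3, ∑ l : Fin 3, G c c l p * K l b p)
      - (∑ c : Fin 3, ∑ l : Fin 3, G c b l p * K c l p)
      - fr f b (trK K) p )

/-- The unmodified evolution equation (E-Γ₀) for `Γ_ijb` at the point `p`. -/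
def EG0 (f K : Fin 3 → Fin 3 → Pt → ℝ) (G : Fin 3 → Fin 3 → Fin 3 → Pt → ℝ)
    (i j b : Fin 3) (p : Pt) : Prop :=
  pd 0 (G i j b) p + (∑ c : Fin 3, K i c p * G c j b p) =
    fr f j (K b i) p - fr f b (K j i) p
    - (∑ c : Fin 3, G j b c p * K c i p) - (∑ c : Fin 3, G j i c p * K b c p)
    + (∑ c : Fin 3, G b j c p * K c i p) + (∑ c : Fin 3, G b i c p * K j c p)

/-- The frame evolution equation (E-f) at every point. -/
def Ef (f K : Fin 3 → Fin 3 → Pt → ℝ) : Prop :=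
  ∀ (i j : Fin 3) (p : Pt), pd 0 (f i j) p + (∑ c : Fin 3, K i c p * f c j p) = 0

/-- The inverse frame evolution equation (E-f⁻¹) at every point. -/
def Efi (fi K : Fin 3 → Fin 3 → Pt → ℝ) : Prop :=
  ∀ (b j : Fin 3) (p : Pt), pd 0 (fi b j) p - (∑ c : Fin 3, K c b p * fi c j p) = 0

/-- Torsion components `C_ijb = Σ_l f^b_l (e_i f_j^l − e_j f_i^l) − Γ_ijb + Γ_jib`. -/
def Tor (f fi : Fin 3 → Fin 3 → Pt → ℝ) (G : Fin 3 → Fin 3 → Fin 3 → Pt → ℝ)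
    (i j b : Fin 3) (p : Pt) : ℝ :=
  (∑ l : Fin 3, fi b l p * (fr f i (f j l) p - fr f j (f i l) p)) - G i j b p + G j i b p

/-- Spatial covariant derivative `D̃_j K_bi = e_j K_bi − Σ_l Γ_jbl K_li − Σ_l Γ_jil K_bl`. -/
def DtK (f K : Fin 3 → Fin 3 → Pt → ℝ) (G : Fin 3 → Fin 3 → Fin 3 → Pt → ℝ)
    (j b i : Fin 3) (p : Pt) : ℝ :=
  fr f j (K b i) p - (∑ l : Fin 3, G j b l p * K l i p) - (∑ l : Fin 3, G j i l p * K b l p)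

/-- `R̂_b0 = Σ_i D̃_i K_bi − e_b (tr K)`. -/
def Rb0 (f K : Fin 3 → Fin 3 → Pt → ℝ) (G : Fin 3 → Fin 3 → Fin 3 → Pt → ℝ)
    (b : Fin 3) (p : Pt) : ℝ :=
  (∑ i : Fin 3, DtK f K G i b i p) - fr f b (trK K) p

/-- Modified spatial curvature `R̂_aijb`. -/
def Rhat (f : Fin 3 → Fin 3 → Pt → ℝ) (G : Fin 3 → Fin 3 → Fin 3 → Pt → ℝ)
    (a i j b : Fin 3) (p : Pt) : ℝ :=
  fr f a (G i j b) p - fr f i (G a j b) p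
  - (∑ c : Fin 3, G a b c p * G i j c p)
  + (∑ c : Fin 3, G i b c p * G a j c p)
  - (∑ c : Fin 3, (G a i c p - G i a c p) * G c j b p)

/-- Modified spatial Ricci contraction `r̂_ij = Σ_b R̂_bijb`. -/
def rhat (f : Fin 3 → Fin 3 → Pt → ℝ) (G : Fin 3 → Fin 3 → Fin 3 → Pt → ℝ)
    (i j : Fin 3) (p : Pt) : ℝ :=
  ∑ b : Fin 3, Rhat f G b i j b p

/-- Spatial covariant derivative of the torsion, `D̃_j C_aib`. -/
def DtC (f fi : Fin 3 → Fin 3 → Pt → ℝ) (G : Fin 3 → Fin 3 → Fin 3 → Pt → ℝ)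
    (j a i b : Fin 3) (p : Pt) : ℝ :=
  fr f j (Tor f fi G a i b) p
  - (∑ l : Fin 3, G j a l p * Tor f fi G l i b p)
  - (∑ l : Fin 3, G j i l p * Tor f fi G a l b p)
  - (∑ l : Fin 3, G j b l p * Tor f fi G a i l p)

theorem pd_sum3 (μ : Fin 4) (u : Fin 3 → Pt → ℝ) (hu : ∀ b, ContDiff ℝ (⊤ : ℕ∞) (u b)) (p : Pt) :
    pd μ (fun q => ∑ b : Fin 3, u b q) p = ∑ b : Fin 3, pd μ (u b) p := by
  have h : ∀ b ∈ (Finset.univ : Finset (Fin 3)), DifferentiableAt ℝ (u b) p := fun b _ =>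
    ((hu b).differentiable (by simp)).differentiableAt
  unfold pd
  rw [fderiv_fun_sum h]
  simp

theorem fr_sum3 (f : Fin 3 → Fin 3 → Pt → ℝ) (i : Fin 3) (u : Fin 3 → Pt → ℝ)
    (hu : ∀ b, ContDiff ℝ (⊤ : ℕ∞) (u b)) (p : Pt) :
    fr f i (fun q => ∑ b : Fin 3, u b q) p = ∑ b : Fin 3, fr f i (u b) p := by
  unfold fr
  simp only [pd_sum3 _ u hu, Finset.mul_sum]
  exact Finset.sum_comm

theorem fr_neg3 (f : Fin 3 → Fin 3 → Pt → ℝ) (i : Fin 3) (u v : Pt → ℝ)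
    (h : ∀ q, u q = - v q) (p : Pt) : fr f i u p = - fr f i v p := by
  have : u = -v := funext h
  subst this
  unfold fr pd
  simp [fderiv_neg]

theorem rhat_formula (f : Fin 3 → Fin 3 → Pt → ℝ) (G : Fin 3 → Fin 3 → Fin 3 → Pt → ℝ)
    (hGanti : ∀ (i j b : Fin 3) (p : Pt), G i j b p = - G i b j p) (i j : Fin 3) (p : Pt) :
    rhat f G i j p = (∑ b : Fin 3, fr f b (G i j b) p) - (∑ b : Fin 3, fr f i (G b j b) p)
      - (∑ b : Fin 3, ∑ c : Fin 3, G b b c p * G i j c p)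
      - (∑ b : Fin 3, ∑ c : Fin 3, G b i c p * G c j b p) := by
  have h : (∑ b : Fin 3, ∑ c : Fin 3, G i b c p * G b j c p)
      = - ∑ b : Fin 3, ∑ c : Fin 3, G i b c p * G c j b p := by
    rw [Finset.sum_comm, ← Finset.sum_neg_distrib]
    refine Finset.sum_congr rfl fun b _ => ?_
    rw [← Finset.sum_neg_distrib]
    refine Finset.sum_congr rfl fun c _ => ?_
    rw [hGanti i c b]; ring
  unfold rhat Rhat
  simp only [sub_mul, Finset.sum_sub_distrib, Finset.sum_add_distrib]
  rw [h]; ring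

/-- equation (Rijeq) of Lemma 4.4: the symmetric spatial modified
Ricci components are pure trace. -/
theorem symmetric_Ricci_pure_trace
    (f K : Fin 3 → Fin 3 → Pt → ℝ) (G : Fin 3 → Fin 3 → Fin 3 → Pt → ℝ)
    (hf : ∀ i j, ContDiff ℝ (⊤ : ℕ∞) (f i j))
    (hK : ∀ i j, ContDiff ℝ (⊤ : ℕ∞) (K i j)) (hG : ∀ i j b, ContDiff ℝ (⊤ : ℕ∞) (G i j b))
    (hKsym : ∀ (i j : Fin 3) (p : Pt), K i j p = K j i p)
    (hGanti : ∀ (i j b : Fin 3) (p : Pt), G i j b p = - G i b j p)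
    (hEK : ∀ (i j : Fin 3) (p : Pt), EK f K G i j p) :
    ∀ (i j : Fin 3) (p : Pt),
      pd 0 (K i j) p + trK K p * K i j p
        + (1 / 2) * (rhat f G i j p + rhat f G j i p)
      = kd i j * (pd 0 (trK K) p + nK2 K p) := by
  intro i j p
  have hs : ∀ i j : Fin 3, fr f i (fun q => ∑ b : Fin 3, G b j b q) p
      = ∑ b : Fin 3, fr f i (G b j b) p := fun i j =>
    fr_sum3 f i (fun b => G b j b) (fun b => hG b j b) p
  have hD : ∀ a i j b : Fin 3, fr f a (G i j b) p = - fr f a (G i b j) p := fun a i j b =>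
    fr_neg3 f a _ _ (hGanti i j b) p
  have htr : pd 0 (trK K) p = ∑ c : Fin 3, pd 0 (K c c) p :=
    pd_sum3 0 (fun c => K c c) (fun c => hK c c) p
  have E := hEK i j p
  have E0 := hEK 0 0 p
  have E1 := hEK 1 1 p
  have E2 := hEK 2 2 p
  unfold EK at E E0 E1 E2
  simp only [hs] at E E0 E1 E2
  rw [rhat_formula f G hGanti, rhat_formula f G hGanti]
  have key : pd 0 (trK K) p + nK2 K p = - (1 / 2) *
      ( 2 * (∑ a : Fin 3, ∑ b : Fin 3, fr f a (G b a b) p)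
      + (∑ b : Fin 3, ∑ a : Fin 3, ∑ c : Fin 3, G b a c p * G c a b p)
      + (∑ c : Fin 3, (∑ b : Fin 3, G b b c p) * (∑ a : Fin 3, G a a c p))
      + nK2 K p - (trK K p) ^ 2 ) := by
    have hd : (∑ a : Fin 3, ∑ b : Fin 3, fr f b (G a a b) p)
        = - ∑ a : Fin 3, ∑ b : Fin 3, fr f a (G b a b) p := by
      rw [Finset.sum_comm]
      simp only [← Finset.sum_neg_distrib]
      exact Finset.sum_congr rfl fun a _ => Finset.sum_congr rfl fun b _ => hD a b b a
    have ht : trK K p = K 0 0 p + K 1 1 p + K 2 2 p := by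
      simp [trK, Fin.sum_univ_three]
    rw [htr]
    simp only [kd, if_true] at E0 E1 E2
    generalize nK2 K p = N at *
    generalize trK K p = T at *
    simp only [Fin.sum_univ_three] at E0 E1 E2 hd ⊢
    linear_combination E0 + E1 + E2 - hd + T * ht
  rw [key]
  linear_combination E
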